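/- For every integer w ≥ 3, with v = w−1, ∑_{a+b=w, a≥2, b≥1} ζ(ā,b) = ζ(v̄,1̄) + ζ(1̄,v̄) − ζ(v̄,1) − ζ(1̄,v) + ζ(w). -/

import Mathlib

open Filter

/-- Depth-1 Euler sum `ζ(s; e) = ∑_{n ≥ 1} eⁿ / nˢ`,
defined as the limit of partial sums. `e = 1` gives `ζ(s)`, `e = -1` gives `ζ(s̄)`. -/
noncomputable def eulerSum1 (s : ℕ) (e : ℝ) : ℝ :=
  limUnder atTop (fun N : ℕ =>
    ∑ n ∈ Finset.Icc 1 N, e ^ n / (n : ℝ) ^ s)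

/-- Depth-2 Euler sum `ζ(s₁, s₂; e₁, e₂) = ∑_{n₁ > n₂ ≥ 1} e₁^{n₁} e₂^{n₂} / (n₁^{s₁} n₂^{s₂})`,
defined as the limit of iterated partial sums. A bar over an argument means the
corresponding sign is `-1`. -/
noncomputable def eulerSum2 (s₁ s₂ : ℕ) (e₁ e₂ : ℝ) : ℝ :=
  limUnder atTop (fun N : ℕ =>
    ∑ n₁ ∈ Finset.Icc 1 N, ∑ n₂ ∈ Finset.Ico 1 n₁,
      e₁ ^ n₁ * e₂ ^ n₂ / ((n₁ : ℝ) ^ s₁ * (n₂ : ℝ) ^ s₂))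

/-- Depth-3 Euler sum
`ζ(s₁, s₂, s₃; e₁, e₂, e₃) = ∑_{n₁ > n₂ > n₃ ≥ 1} e₁^{n₁} e₂^{n₂} e₃^{n₃} / (n₁^{s₁} n₂^{s₂} n₃^{s₃})`. -/
noncomputable def eulerSum3 (s₁ s₂ s₃ : ℕ) (e₁ e₂ e₃ : ℝ) : ℝ :=
  limUnder atTop (fun N : ℕ =>
    ∑ n₁ ∈ Finset.Icc 1 N, ∑ n₂ ∈ Finset.Ico 1 n₁, ∑ n₃ ∈ Finset.Ico 1 n₂,
      e₁ ^ n₁ * e₂ ^ n₂ * e₃ ^ n₃ / ((n₁ : ℝ) ^ s₁ * (n₂ : ℝ) ^ s₂ * (n₃ : ℝ) ^ s₃))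

/-- Depth-1 multiple T-value `T(s) = 2 ∑_{m odd, m ≥ 1} 1 / mˢ`. -/
noncomputable def tValue1 (s : ℕ) : ℝ :=
  limUnder atTop (fun N : ℕ =>
    ∑ m ∈ Finset.Icc 1 N, if m % 2 = 1 then 2 / (m : ℝ) ^ s else 0)

/-- Depth-2 multiple T-value
`T(s₁, s₂) = ∑_{m₁ > m₂ > 0, m₁ even, m₂ odd} 4 / (m₁^{s₁} m₂^{s₂})`. -/
noncomputable def tValue2 (s₁ s₂ : ℕ) : ℝ :=
  limUnder atTop (fun N : ℕ =>
    ∑ m₁ ∈ Finset.Icc 1 N, ∑ m₂ ∈ Finset.Ico 1 m₁,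
      if m₁ % 2 = 0 ∧ m₂ % 2 = 1 then 4 / ((m₁ : ℝ) ^ s₁ * (m₂ : ℝ) ^ s₂) else 0)

/-- Depth-3 multiple T-value
`T(s₁, s₂, s₃) = ∑_{m₁ > m₂ > m₃ > 0, m₁ odd, m₂ even, m₃ odd} 8 / (m₁^{s₁} m₂^{s₂} m₃^{s₃})`. -/
noncomputable def tValue3 (s₁ s₂ s₃ : ℕ) : ℝ :=
  limUnder atTop (fun N : ℕ =>
    ∑ m₁ ∈ Finset.Icc 1 N, ∑ m₂ ∈ Finset.Ico 1 m₁, ∑ m₃ ∈ Finset.Ico 1 m₂,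
      if m₁ % 2 = 1 ∧ m₂ % 2 = 0 ∧ m₃ % 2 = 1 then
        8 / ((m₁ : ℝ) ^ s₁ * (m₂ : ℝ) ^ s₂ * (m₃ : ℝ) ^ s₃) else 0)

open Topology

/-- The general term `eⁿ / nˢ` of a depth-1 Euler sum. -/
noncomputable def eulerTerm (s : ℕ) (e : ℝ) (n : ℕ) : ℝ := e ^ n / (n : ℝ) ^ s

theorem eulerTerm_zero {s : ℕ} (hs : 1 ≤ s) (e : ℝ) : eulerTerm s e 0 = 0 := by
  simp [eulerTerm, Nat.one_le_iff_ne_zero.mp hs]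

theorem abs_eulerTerm (s : ℕ) {e : ℝ} (he : |e| = 1) (n : ℕ) :
    |eulerTerm s e n| = 1 / (n : ℝ) ^ s := by
  simp [eulerTerm, abs_div, abs_pow, he]

theorem summable_abs_eulerTerm {s : ℕ} (hs : 2 ≤ s) {e : ℝ} (he : |e| = 1) :
    Summable fun n => |eulerTerm s e n| := by
  simp_rw [abs_eulerTerm s he]
  exact Real.summable_one_div_nat_pow.mpr hs

/-- Partial sums over `1, …, N` of a summable sequence converge. -/
theorem exists_tendsto_sum_Icc_of_summable {f : ℕ → ℝ} (hf : Summable f) :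
    ∃ l, Tendsto (fun N => ∑ n ∈ Finset.Icc 1 N, f n) atTop (𝓝 l) := by
  refine ⟨_, ((hf.hasSum.tendsto_sum_nat.comp (tendsto_add_atTop_nat 1)).sub_const (f 0)).congr
    fun N => ?_⟩
  have h := Finset.sum_range_eq_add_Ico f (Nat.succ_pos N)
  simp only [Function.comp_apply]
  rw [h, add_sub_cancel_left]
  rfl

theorem exists_tendsto_sum_alternating_harmonic :
    ∃ l, Tendsto (fun N => ∑ n ∈ Finset.Icc 1 N, eulerTerm 1 (-1) n) atTop (𝓝 l) := by
  have hanti : Antitone fun n : ℕ => 1 / ((n : ℝ) + 1) := fun m n hmn =>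
    one_div_le_one_div_of_le (by positivity) (by gcongr)
  obtain ⟨l, hl⟩ := hanti.tendsto_alternating_series_of_tendsto_zero
    tendsto_one_div_add_atTop_nhds_zero_nat
  refine ⟨-l, hl.neg.congr fun N => ?_⟩
  induction N with
  | zero => simp
  | succ N ih =>
    rw [Finset.sum_range_succ, neg_add, ih, Finset.sum_Icc_succ_top (Nat.le_add_left 1 N)]
    simp [eulerTerm, pow_succ, div_eq_mul_inv]

/-- Dominated convergence for the sums `∑_{1 ≤ m ≤ N} a m * F N m`. -/
theorem tendsto_sum_Icc_mul {a : ℕ → ℝ} (ha : Summable fun n => |a n|) (ha0 : a 0 = 0)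
    {F : ℕ → ℕ → ℝ} {f : ℕ → ℝ} {K : ℝ} (hK : ∀ N m, |F N m| ≤ K)
    (hF : ∀ m, Tendsto (fun N => F N m) atTop (𝓝 (f m))) :
    Tendsto (fun N => ∑ m ∈ Finset.Icc 1 N, a m * F N m) atTop (𝓝 (∑' m, a m * f m)) := by
  have hsum : ∀ N, ∑ m ∈ Finset.Icc 1 N, a m * F N m
      = ∑' m, if m ∈ Finset.Icc 1 N then a m * F N m else 0 := fun N => by
    rw [tsum_eq_sum (s := Finset.Icc 1 N) fun m hm => if_neg hm]
    exact Finset.sum_congr rfl fun m hm => (if_pos hm).symm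
  simp_rw [hsum]
  have hK0 : 0 ≤ K := (abs_nonneg _).trans (hK 0 0)
  refine tendsto_tsum_of_dominated_convergence (ha.mul_right K) (fun m => ?_)
    (Eventually.of_forall fun N m => ?_)
  · refine ((hF m).const_mul (a m)).congr' ?_
    filter_upwards [eventually_ge_atTop m] with N hN
    rcases Nat.eq_zero_or_pos m with rfl | hm
    · simp [ha0]
    · rw [if_pos (Finset.mem_Icc.mpr ⟨hm, hN⟩)]
  · split_ifs
    · rw [Real.norm_eq_abs, abs_mul]
      exact mul_le_mul_of_nonneg_left (hK N m) (abs_nonneg _)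
    · rw [norm_zero]
      positivity

theorem sum_Icc_sum_Ico_comm (g : ℕ → ℕ → ℝ) (N : ℕ) :
    ∑ n ∈ Finset.Icc 1 N, ∑ m ∈ Finset.Ico 1 n, g n m
      = ∑ m ∈ Finset.Icc 1 N, ∑ n ∈ Finset.Ioc m N, g n m :=
  Finset.sum_comm' fun n m => by
    simp only [Finset.mem_Icc, Finset.mem_Ico, Finset.mem_Ioc]
    omega

theorem sum_Ioc_eq_sub (b : ℕ → ℝ) {m N : ℕ} (h : m ≤ N) :
    ∑ n ∈ Finset.Ioc m N, b n = ∑ n ∈ Finset.Icc 1 N, b n - ∑ n ∈ Finset.Icc 1 m, b n := by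
  rw [eq_sub_iff_add_eq, add_comm]
  exact Finset.sum_Ioc_consecutive b (Nat.zero_le m) h

theorem sum_Ioc_sub (b : ℕ → ℝ) (m N : ℕ) :
    ∑ n ∈ Finset.Ioc m N, b (n - m) = ∑ k ∈ Finset.Icc 1 (N - m), b k := by
  refine Finset.sum_nbij' (· - m) (· + m) ?_ ?_ ?_ ?_ ?_ <;>
    simp only [Finset.mem_Ioc, Finset.mem_Icc] <;> intros <;> first | omega | trivial

theorem exists_bound_of_tendsto {B : ℕ → ℝ} {l : ℝ} (hB : Tendsto B atTop (𝓝 l)) :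
    ∃ K, ∀ N, |B N| ≤ K := by
  obtain ⟨K, hK⟩ := (Metric.isBounded_range_of_tendsto B hB).exists_norm_le
  exact ⟨K, fun N => hK _ ⟨N, rfl⟩⟩

/-- Nested sums with an absolutely convergent inner series and a convergent outer one converge. -/
theorem exists_tendsto_nested_sum {a b : ℕ → ℝ} (ha : Summable fun n => |a n|) (ha0 : a 0 = 0)
    {l : ℝ} (hb : Tendsto (fun N => ∑ n ∈ Finset.Icc 1 N, b n) atTop (𝓝 l)) :
    ∃ L, Tendsto (fun N => ∑ n ∈ Finset.Icc 1 N, ∑ m ∈ Finset.Ico 1 n, b n * a m)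
      atTop (𝓝 L) := by
  obtain ⟨K, hK⟩ := exists_bound_of_tendsto hb
  refine ⟨_, (tendsto_sum_Icc_mul ha ha0 (K := K + K)
    (F := fun N m => ∑ n ∈ Finset.Icc 1 N, b n - ∑ n ∈ Finset.Icc 1 m, b n)
    (fun N m => (abs_sub _ _).trans (add_le_add (hK N) (hK m)))
    (fun m => hb.sub_const _)).congr fun N => ?_⟩
  rw [sum_Icc_sum_Ico_comm]
  refine Finset.sum_congr rfl fun m hm => ?_
  rw [← sum_Ioc_eq_sub b (Finset.mem_Icc.mp hm).2, Finset.mul_sum]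
  exact Finset.sum_congr rfl fun n _ => mul_comm _ _

/-- Mertens' theorem for Cauchy products of series starting at index `1`. -/
theorem tendsto_cauchy_product {a b : ℕ → ℝ} (ha : Summable fun n => |a n|) (ha0 : a 0 = 0)
    {l k : ℝ} (hA : Tendsto (fun N => ∑ n ∈ Finset.Icc 1 N, a n) atTop (𝓝 k))
    (hb : Tendsto (fun N => ∑ n ∈ Finset.Icc 1 N, b n) atTop (𝓝 l)) :
    Tendsto (fun N => ∑ n ∈ Finset.Icc 1 N, ∑ m ∈ Finset.Ico 1 n, a m * b (n - m))
      atTop (𝓝 (k * l)) := by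
  obtain ⟨K, hK⟩ := exists_bound_of_tendsto hb
  have hk : ∑' m, a m * l = k * l := by
    refine tendsto_nhds_unique (tendsto_sum_Icc_mul ha ha0 (F := fun _ _ => l) (K := |l|)
      (fun _ _ => le_rfl) fun _ => tendsto_const_nhds) ?_
    simpa only [Finset.sum_mul] using hA.mul_const l
  rw [← hk]
  refine (tendsto_sum_Icc_mul ha ha0
    (F := fun N m => ∑ n ∈ Finset.Icc 1 (N - m), b n) (fun N m => hK (N - m))
    (fun m => hb.comp (tendsto_sub_atTop_nat m))).congr fun N => ?_
  rw [sum_Icc_sum_Ico_comm]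
  refine Finset.sum_congr rfl fun m _ => ?_
  rw [← sum_Ioc_sub, Finset.mul_sum]

/-- The stuffle product of two truncated series. -/
theorem sum_Icc_mul_sum_Icc (a b : ℕ → ℝ) (N : ℕ) :
    (∑ n ∈ Finset.Icc 1 N, a n) * ∑ n ∈ Finset.Icc 1 N, b n
      = ∑ n ∈ Finset.Icc 1 N, ∑ m ∈ Finset.Ico 1 n, a n * b m
        + ∑ n ∈ Finset.Icc 1 N, ∑ m ∈ Finset.Ico 1 n, b n * a m
        + ∑ n ∈ Finset.Icc 1 N, a n * b n := by
  induction N with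
  | zero => simp
  | succ N ih =>
    have hI : Finset.Ico 1 (N + 1) = Finset.Icc 1 N := rfl
    simp only [Finset.sum_Icc_succ_top (Nat.le_add_left 1 N), hI, ← Finset.mul_sum] at ih ⊢
    linear_combination ih

theorem eulerSum2_eq_limUnder (s t : ℕ) (e f : ℝ) :
    eulerSum2 s t e f = limUnder atTop fun N : ℕ =>
      ∑ n ∈ Finset.Icc 1 N, ∑ m ∈ Finset.Ico 1 n, eulerTerm s e n * eulerTerm t f m := by
  simp only [eulerSum2, eulerTerm, div_mul_div_comm]

theorem tendsto_eulerSum2_of_exists {s t : ℕ} {e f : ℝ}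
    (h : ∃ L, Tendsto (fun N : ℕ => ∑ n ∈ Finset.Icc 1 N, ∑ m ∈ Finset.Ico 1 n,
      eulerTerm s e n * eulerTerm t f m) atTop (𝓝 L)) :
    Tendsto (fun N : ℕ => ∑ n ∈ Finset.Icc 1 N, ∑ m ∈ Finset.Ico 1 n,
      eulerTerm s e n * eulerTerm t f m) atTop (𝓝 (eulerSum2 s t e f)) := by
  rw [eulerSum2_eq_limUnder]
  exact tendsto_nhds_limUnder h

theorem tendsto_eulerSum2_one_left {t : ℕ} (ht : 2 ≤ t) {f : ℝ} (hf : |f| = 1) :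
    Tendsto (fun N : ℕ => ∑ n ∈ Finset.Icc 1 N, ∑ m ∈ Finset.Ico 1 n,
      eulerTerm 1 (-1) n * eulerTerm t f m) atTop (𝓝 (eulerSum2 1 t (-1) f)) :=
  tendsto_eulerSum2_of_exists <|
    exists_tendsto_sum_alternating_harmonic.elim fun _ hl =>
      exists_tendsto_nested_sum (summable_abs_eulerTerm ht hf)
        (eulerTerm_zero (one_le_two.trans ht) f) hl

theorem one_div_pow_mul_one_div_pow_le {s t m n : ℕ} (hs : 2 ≤ s) (ht : 1 ≤ t) (hm : 1 ≤ m)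
    (hmn : m ≤ n) :
    1 / (n : ℝ) ^ s * (1 / (m : ℝ) ^ t)
      ≤ 1 / (n : ℝ) ^ (3 / 2 : ℝ) * (1 / (m : ℝ) ^ (3 / 2 : ℝ)) := by
  have hm1 : (1 : ℝ) ≤ m := by exact_mod_cast hm
  have hmn1 : (m : ℝ) ≤ n := by exact_mod_cast hmn
  have hm0 : (0 : ℝ) < m := by linarith
  have hn0 : (0 : ℝ) < n := by linarith
  have hsplit : ∀ x : ℝ, 0 < x → x ^ (3 / 2 : ℝ) = x * √x := fun x hx => by
    rw [Real.sqrt_eq_rpow, ← Real.rpow_one_add' hx.le (by norm_num)]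
    norm_num
  rw [one_div_mul_one_div, one_div_mul_one_div, hsplit _ hn0, hsplit _ hm0]
  refine one_div_le_one_div_of_le (by positivity) ?_
  calc (n : ℝ) * √n * (m * √m) ≤ n * √n * (m * √n) := by gcongr
    _ = n ^ 2 * m ^ 1 := by linear_combination (n : ℝ) * m * Real.mul_self_sqrt hn0.le
    _ ≤ n ^ s * m ^ t := by
      gcongr
      linarith

theorem tendsto_eulerSum2 {s t : ℕ} (hs : 2 ≤ s) (ht : 1 ≤ t) {e f : ℝ} (he : |e| = 1)
    (hf : |f| = 1) :
    Tendsto (fun N : ℕ => ∑ n ∈ Finset.Icc 1 N, ∑ m ∈ Finset.Ico 1 n,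
      eulerTerm s e n * eulerTerm t f m) atTop (𝓝 (eulerSum2 s t e f)) := by
  refine tendsto_eulerSum2_of_exists (exists_tendsto_sum_Icc_of_summable ?_)
  have hsum : Summable fun n : ℕ => 1 / (n : ℝ) ^ (3 / 2 : ℝ) :=
    Real.summable_one_div_nat_rpow.mpr (by norm_num)
  refine Summable.of_norm_bounded
    (hsum.mul_right (∑' m : ℕ, 1 / (m : ℝ) ^ (3 / 2 : ℝ))) fun n => ?_
  refine (norm_sum_le _ _).trans ?_
  calc ∑ m ∈ Finset.Ico 1 n, ‖eulerTerm s e n * eulerTerm t f m‖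
      ≤ ∑ m ∈ Finset.Ico 1 n, 1 / (n : ℝ) ^ (3 / 2 : ℝ) * (1 / (m : ℝ) ^ (3 / 2 : ℝ)) := by
        refine Finset.sum_le_sum fun m hm => ?_
        rw [Finset.mem_Ico] at hm
        rw [norm_mul, Real.norm_eq_abs, Real.norm_eq_abs, abs_eulerTerm s he, abs_eulerTerm t hf]
        exact one_div_pow_mul_one_div_pow_le hs ht hm.1 hm.2.le
    _ ≤ _ := by
        rw [← Finset.mul_sum]
        exact mul_le_mul_of_nonneg_left
          (hsum.sum_le_tsum _ fun m _ => by positivity) (by positivity)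

theorem tendsto_eulerSum1 {s : ℕ} (hs : 2 ≤ s) {e : ℝ} (he : |e| = 1) :
    Tendsto (fun N : ℕ => ∑ n ∈ Finset.Icc 1 N, eulerTerm s e n) atTop (𝓝 (eulerSum1 s e)) :=
  tendsto_nhds_limUnder
    (exists_tendsto_sum_Icc_of_summable (summable_abs_eulerTerm hs he).of_abs)

/-- The partial fraction identity `∑_{a+b=v+1} x⁻ᵃ y⁻ᵇ = (y⁻ᵛ - x⁻ᵛ) / (x - y)`. -/
theorem sum_one_div_pow_mul_pow {x y : ℝ} (hx : x ≠ 0) (hy : y ≠ 0) (hxy : x - y ≠ 0) (v : ℕ) :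
    ∑ a ∈ Finset.Icc 1 v, 1 / (x ^ a * y ^ (v + 1 - a)) = (1 / y ^ v - 1 / x ^ v) / (x - y) := by
  induction v with
  | zero => simp
  | succ v ih =>
    have hstep : ∑ a ∈ Finset.Icc 1 v, 1 / (x ^ a * y ^ (v + 1 + 1 - a))
        = (∑ a ∈ Finset.Icc 1 v, 1 / (x ^ a * y ^ (v + 1 - a))) / y := by
      rw [Finset.sum_div]
      refine Finset.sum_congr rfl fun a ha => ?_
      rw [Nat.sub_add_comm (by simp at ha; omega : a ≤ v + 1), pow_succ, div_div, mul_assoc]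
    rw [Finset.sum_Icc_succ_top (Nat.le_add_left 1 v), hstep, ih, Nat.add_sub_cancel_left]
    field_simp
    ring

theorem sum_eulerTerm_mul_eulerTerm {v m n : ℕ} (hv : 1 ≤ v) (hm : 1 ≤ m) (hmn : m < n) :
    ∑ a ∈ Finset.Icc 2 v, eulerTerm a (-1) n * eulerTerm (v + 1 - a) 1 m
      = eulerTerm v (-1) m * eulerTerm 1 (-1) (n - m)
        - eulerTerm v (-1) n * eulerTerm 1 1 (n - m)
        - eulerTerm 1 (-1) n * eulerTerm v 1 m := by
  have hm0 : (m : ℝ) ≠ 0 := by positivity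
  have hn0 : (n : ℝ) ≠ 0 := by
    have : 0 < n := by omega
    positivity
  have hd : (n : ℝ) - m ≠ 0 := sub_ne_zero.mpr (by exact_mod_cast hmn.ne')
  have hpf := sum_one_div_pow_mul_pow hn0 hm0 hd v
  have hI : Finset.Icc 1 v = insert 1 (Finset.Icc 2 v) := by ext; simp; omega
  rw [hI, Finset.sum_insert (by simp)] at hpf
  have hsign : (-1 : ℝ) ^ m * (-1) ^ (n - m) = (-1) ^ n := by
    rw [← pow_add, Nat.add_sub_cancel' hmn.le]
  have hL : ∑ a ∈ Finset.Icc 2 v, eulerTerm a (-1) n * eulerTerm (v + 1 - a) 1 m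
      = (-1) ^ n * ∑ a ∈ Finset.Icc 2 v, 1 / ((n : ℝ) ^ a * (m : ℝ) ^ (v + 1 - a)) := by
    rw [Finset.mul_sum]
    refine Finset.sum_congr rfl fun a _ => ?_
    simp only [eulerTerm, one_pow, mul_one_div, div_div]
  rw [hL, eq_sub_of_add_eq' hpf]
  simp only [eulerTerm, one_pow, pow_one, Nat.cast_sub hmn.le, Nat.add_sub_cancel,
    div_mul_div_comm, hsign]
  field_simp

theorem sum_partial_eulerSum2 {v : ℕ} (hv : 1 ≤ v) (N : ℕ) :
    ∑ a ∈ Finset.Icc 2 v, ∑ n ∈ Finset.Icc 1 N, ∑ m ∈ Finset.Ico 1 n,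
        eulerTerm a (-1) n * eulerTerm (v + 1 - a) 1 m
      = ∑ n ∈ Finset.Icc 1 N, ∑ m ∈ Finset.Ico 1 n,
          eulerTerm v (-1) m * eulerTerm 1 (-1) (n - m)
        - ∑ n ∈ Finset.Icc 1 N, ∑ m ∈ Finset.Ico 1 n, eulerTerm v (-1) n * eulerTerm 1 1 m
        - ∑ n ∈ Finset.Icc 1 N, ∑ m ∈ Finset.Ico 1 n, eulerTerm 1 (-1) n * eulerTerm v 1 m := by
  rw [Finset.sum_comm, ← Finset.sum_sub_distrib, ← Finset.sum_sub_distrib]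
  refine Finset.sum_congr rfl fun n _ => ?_
  have hreflect : ∑ m ∈ Finset.Ico 1 n, eulerTerm v (-1) n * eulerTerm 1 1 m
      = ∑ m ∈ Finset.Ico 1 n, eulerTerm v (-1) n * eulerTerm 1 1 (n - m) := by
    refine Finset.sum_nbij' (n - ·) (n - ·) ?_ ?_ ?_ ?_ ?_ <;>
      simp only [Finset.mem_Ico] <;> intro m hm
    · omega
    · omega
    · omega
    · omega
    · rw [Nat.sub_sub_self hm.2.le]
  rw [Finset.sum_comm, hreflect, ← Finset.sum_sub_distrib, ← Finset.sum_sub_distrib]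
  refine Finset.sum_congr rfl fun m hm => ?_
  rw [Finset.mem_Ico] at hm
  exact sum_eulerTerm_mul_eulerTerm hv hm.1 hm.2

/-- For `w ≥ 3`, with `v = w − 1`:
`∑_{a+b=w, a≥2} ζ(ā,b) = ζ(v̄,1̄) + ζ(1̄,v̄) − ζ(v̄,1) − ζ(1̄,v) + ζ(w)`. -/
theorem sum_zeta_bar_unbar (w : ℕ) (hw : 3 ≤ w) :
    ∑ a ∈ Finset.Icc 2 (w - 1), eulerSum2 a (w - a) (-1) 1
      = eulerSum2 (w - 1) 1 (-1) (-1) + eulerSum2 1 (w - 1) (-1) (-1)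
        - eulerSum2 (w - 1) 1 (-1) 1 - eulerSum2 1 (w - 1) (-1) 1 + eulerSum1 w 1 := by
  obtain ⟨v, rfl⟩ : ∃ v, w = v + 1 := ⟨w - 1, by omega⟩
  have hv : 2 ≤ v := by omega
  have hneg : |(-1 : ℝ)| = 1 := by simp
  have hone : |(1 : ℝ)| = 1 := abs_one
  rw [Nat.add_sub_cancel]
  obtain ⟨l, hl⟩ := exists_tendsto_sum_alternating_harmonic
  have hA := tendsto_eulerSum1 hv hneg
  have hcauchy := tendsto_cauchy_product (summable_abs_eulerTerm hv hneg)
    (eulerTerm_zero (one_le_two.trans hv) (-1)) hA hl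
  have hstuffle : eulerSum1 v (-1) * l
      = eulerSum2 v 1 (-1) (-1) + eulerSum2 1 v (-1) (-1) + eulerSum1 (v + 1) 1 := by
    refine tendsto_nhds_unique (hA.mul hl)
      ((((tendsto_eulerSum2 hv le_rfl hneg hneg).add (tendsto_eulerSum2_one_left hv hneg)).add
        (tendsto_eulerSum1 (by omega : 2 ≤ v + 1) hone)).congr fun N => ?_)
    rw [sum_Icc_mul_sum_Icc]
    congr 1
    refine Finset.sum_congr rfl fun n _ => ?_
    simp only [eulerTerm, div_mul_div_comm, ← mul_pow, pow_succ, pow_zero, one_mul, mul_neg,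
      neg_neg, mul_one]
  have hsum := tendsto_finsetSum (Finset.Icc 2 v) fun a ha =>
    tendsto_eulerSum2 (Finset.mem_Icc.mp ha).1
      (by rw [Finset.mem_Icc] at ha; omega : 1 ≤ v + 1 - a) hneg hone
  rw [tendsto_nhds_unique (hsum.congr fun N => sum_partial_eulerSum2 (one_le_two.trans hv) N)
    ((hcauchy.sub (tendsto_eulerSum2 hv le_rfl hneg hone)).sub
      (tendsto_eulerSum2_one_left hv hone)), hstuffle]
  ring
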